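/- Let m ≥ 2 and r ≥ 2 be integers, let P = (m, 𝓔) be the r-pattern where 𝓔 is the collection of all r-multisets on [m] except the m multisets {i,i,…,i} (i ∈ [m]), and let G be any r-graph. Then λ(P ⊕_{[m]} P_G) = 1 − (1 − λ(G))/m^{r−1}. -/

import Mathlib

/-!
Let `x` be a weight vector on `[m] × V` and let `y i` be the total weight of the `i`-th copy of `V`.
The `r`-multisets missing from the union pattern are exactly the copies, one for every `i`, of the
`r`-multisets on `V` that are not edges of `G` (`allMultisets_sdiff_union`). The multinomial theorem
says that the family of all `r`-multisets has Lagrange polynomial `(∑ x) ^ r`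
(`lagrangePoly_allMultisets`), so on the simplex

  `λ(x) = 1 - ∑ i, (y i ^ r - λ_G(x i))`   (`lagrangePoly_union`).

Since `λ_G` is homogeneous of degree `r`, `λ_G(x i) ≤ λ(G) * y i ^ r`, and therefore
`λ(x) ≤ 1 - (1 - λ(G)) * ∑ i, y i ^ r`. As `λ(G) ≤ 1`, the power mean inequality
`∑ i, y i ^ r ≥ m ^ (1 - r)` yields the upper bound. For the lower bound, give every copy of `V`
the weight vector `z / m`, with `z` in the simplex on `V`, and take the supremum over `z`.
-/

open Filter Topology

noncomputable section

/-- The Lagrange polynomial `λ_𝓔` of a family `E` of `r`-multisets on the index type `ι`: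
`λ_𝓔(x) = r! · ∑_{E ∈ 𝓔} ∏_i x_i^{E(i)} / E(i)!`. -/
def lagrangePoly {ι : Type} [Fintype ι] [DecidableEq ι]
    (r : ℕ) (E : Finset (Multiset ι)) (x : ι → ℝ) : ℝ :=
  (Nat.factorial r : ℝ) *
    ∑ e ∈ E, ∏ i, x i ^ (Multiset.count i e) / ((Multiset.count i e).factorial : ℝ)

/-- The Lagrangian `λ(P)` of a pattern `P = (ι, E)`: the maximum of the Lagrange polynomial
over the standard simplex. -/
def patternLagrangian {ι : Type} [Fintype ι] [DecidableEq ι]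
    (r : ℕ) (E : Finset (Multiset ι)) : ℝ :=
  sSup (lagrangePoly r E '' stdSimplex ℝ ι)

/-- The family `𝓔[S]` of the induced subpattern `P[S]`, consisting of those multisets of `E`
all of whose elements lie in `S`, relabelled as multisets on the subtype `{i // i ∈ S}`. -/
def subFamily {ι : Type} [DecidableEq ι] (E : Finset (Multiset ι)) (S : Finset ι) :
    Finset (Multiset {i : ι // i ∈ S}) := by
  classical
  exact (E.filter (fun e => ∀ i ∈ e, i ∈ S)).image
    (fun e => Multiset.filterMap
      (fun i => if h : i ∈ S then some (⟨i, h⟩ : {i : ι // i ∈ S}) else none) e)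

/-- A pattern is minimal if removing any index strictly decreases the Lagrangian.
(`P - i` is exactly the induced subpattern on `univ.erase i`.) -/
def IsMinimalPattern {ι : Type} [Fintype ι] [DecidableEq ι] (r : ℕ)
    (E : Finset (Multiset ι)) : Prop :=
  ∀ i : ι, patternLagrangian r (subFamily E (Finset.univ.erase i)) < patternLagrangian r E

/-- Index set of the union `P₁ ⊕_i P₂`: index `i` of `ι₁` is replaced by a copy of `ι₂`. -/
abbrev unionIndex (ι₁ ι₂ : Type) (i : ι₁) : Type := {j : ι₁ // j ≠ i} ⊕ ι₂

/-- Projection of the union index set back to `ι₁` (collapsing the copy of `ι₂` to `i`). -/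
def unionProj {ι₁ ι₂ : Type} (i : ι₁) : unionIndex ι₁ ι₂ i → ι₁ :=
  Sum.elim (fun j => j.1) (fun _ => i)

/-- The family `𝓔̂` of the union `P₁ ⊕_i P₂`: an `r`-multiset on the new index set belongs to
`𝓔̂` iff its projection to `ι₁` belongs to `E₁` (cases (b),(c)), or it is a copy of a member
of `E₂` lying inside the copy of `ι₂` (case (a)). -/
def unionFamily {ι₁ ι₂ : Type} [Fintype ι₁] [Fintype ι₂] [DecidableEq ι₁] [DecidableEq ι₂]
    (r : ℕ) (E₁ : Finset (Multiset ι₁)) (E₂ : Finset (Multiset ι₂)) (i : ι₁) :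
    Finset (Multiset (unionIndex ι₁ ι₂ i)) := by
  classical
  exact Finset.image (fun R : Sym (unionIndex ι₁ ι₂ i) r => (R : Multiset (unionIndex ι₁ ι₂ i)))
    ((Finset.univ.sym r).filter
      (fun R : Sym (unionIndex ι₁ ι₂ i) r =>
        Multiset.map (unionProj i) (R : Multiset (unionIndex ι₁ ι₂ i)) ∈ E₁ ∨
        ∃ e ∈ E₂, (R : Multiset (unionIndex ι₁ ι₂ i)) = Multiset.map Sum.inr e))

/-- Index set of the union `P₁ ⊕_T P₂`: each index of `T` is replaced by a copy of `ι₂`. -/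
abbrev unionIndexT (ι₁ ι₂ : Type) (T : Finset ι₁) : Type :=
  {j : ι₁ // j ∉ T} ⊕ ({j : ι₁ // j ∈ T} × ι₂)

/-- Projection of the union index set back to `ι₁`. -/
def unionProjT {ι₁ ι₂ : Type} (T : Finset ι₁) : unionIndexT ι₁ ι₂ T → ι₁ :=
  Sum.elim (fun j => j.1) (fun p => p.1.1)

/-- The family `𝓔̂` of the union `P₁ ⊕_T P₂`. -/
def unionFamilyT {ι₁ ι₂ : Type} [Fintype ι₁] [Fintype ι₂] [DecidableEq ι₁] [DecidableEq ι₂]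
    (r : ℕ) (E₁ : Finset (Multiset ι₁)) (E₂ : Finset (Multiset ι₂)) (T : Finset ι₁) :
    Finset (Multiset (unionIndexT ι₁ ι₂ T)) := by
  classical
  exact Finset.image (fun R : Sym (unionIndexT ι₁ ι₂ T) r => (R : Multiset (unionIndexT ι₁ ι₂ T)))
    ((Finset.univ.sym r).filter
      (fun R : Sym (unionIndexT ι₁ ι₂ T) r =>
        Multiset.map (unionProjT T) (R : Multiset (unionIndexT ι₁ ι₂ T)) ∈ E₁ ∨
        ∃ i : {j : ι₁ // j ∈ T}, ∃ e ∈ E₂,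
          (R : Multiset (unionIndexT ι₁ ι₂ T)) = Multiset.map (fun k => Sum.inr (i, k)) e))

/-- The pattern `P_G` associated with an `r`-graph `G`: its multisets are the edges of `G`. -/
def graphPattern {V : Type} [DecidableEq V] (G : Finset (Finset V)) : Finset (Multiset V) :=
  G.image Finset.val

/-- The Lagrangian `λ(G)` of an `r`-graph `G`. -/
def graphLagrangian {V : Type} [Fintype V] [DecidableEq V] (r : ℕ) (G : Finset (Finset V)) : ℝ :=
  patternLagrangian r (graphPattern G)

/-- `α` is a jump for `r`. -/
def IsJump (r : ℕ) (α : ℝ) : Prop :=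
  ∃ c : ℝ, 0 < c ∧ ∀ ε : ℝ, 0 < ε → ∀ m : ℕ, r ≤ m → ∃ n₀ : ℕ, ∀ n : ℕ, n₀ ≤ n →
    ∀ G : Finset (Finset (Fin n)), (∀ e ∈ G, e.card = r) →
      α + ε ≤ (G.card : ℝ) / (n.choose r : ℝ) →
      ∃ W : Finset (Fin n), W.card = m ∧ ∃ H ⊆ G, (∀ e ∈ H, e ⊆ W) ∧
        α + c ≤ (H.card : ℝ) / (m.choose r : ℝ)

/-- `G` contains a copy of `F` as a subgraph. -/
def GraphContains {n k : ℕ} (G : Finset (Finset (Fin n))) (F : Finset (Finset (Fin k))) : Prop :=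
  ∃ φ : Fin k → Fin n, Function.Injective φ ∧ ∀ e ∈ F, e.image φ ∈ G

/-- The Turán number `ex(n, 𝓕)` for a family `𝓕` of graphs, among `r`-uniform hosts. -/
def exNum (r n : ℕ) (𝓕 : Set (Σ k : ℕ, Finset (Finset (Fin k)))) : ℕ :=
  sSup {c : ℕ | ∃ G : Finset (Finset (Fin n)), (∀ e ∈ G, e.card = r) ∧
    (∀ F ∈ 𝓕, ¬ GraphContains G F.2) ∧ G.card = c}

/-- `Π_∞^{(r)}`: the set of Turán densities of (possibly infinite) families of `r`-graphs. -/
def turanDensitySet (r : ℕ) : Set ℝ :=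
  {x | ∃ 𝓕 : Set (Σ k : ℕ, Finset (Finset (Fin k))),
    (∀ F ∈ 𝓕, ∀ e ∈ F.2, e.card = r) ∧
    Tendsto (fun n => (exNum r n 𝓕 : ℝ) / (n.choose r : ℝ)) atTop (nhds x)}

/-- `Λ^{(r)}`: the set of Lagrangians of `r`-graphs. -/
def lambdaSet (r : ℕ) : Set ℝ :=
  {x | ∃ (n : ℕ) (G : Finset (Finset (Fin n))), (∀ e ∈ G, e.card = r) ∧ graphLagrangian r G = x}

/-- The tail `(P_t)_{t ≥ t₀}` of a sequence of patterns is a `(k, l)`-sequence. -/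
def IsKLambdaSeqFrom (r k t₀ : ℕ) (l : ℝ) (ι : ℕ → Type)
    [∀ t, Fintype (ι t)] [∀ t, DecidableEq (ι t)]
    (𝓔 : ∀ t, Finset (Multiset (ι t))) : Prop :=
  ∃ ε : ℕ → ℝ,
    (∀ t, t₀ ≤ t → 0 < ε t) ∧
    Tendsto (fun t => patternLagrangian r (𝓔 t)) atTop (nhds l) ∧
    (∀ t, t₀ ≤ t → l + ε t ≤ patternLagrangian r (𝓔 t)) ∧
    (∀ t, t₀ ≤ t → ∀ S : Finset (ι t), S.card = k →
      patternLagrangian r (subFamily (𝓔 t) S) ≤ l)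

/-- A `(k, l)`-sequence of patterns. -/
def IsKLambdaSeq (r k : ℕ) (l : ℝ) (ι : ℕ → Type)
    [∀ t, Fintype (ι t)] [∀ t, DecidableEq (ι t)]
    (𝓔 : ∀ t, Finset (Multiset (ι t))) : Prop :=
  IsKLambdaSeqFrom r k 0 l ι 𝓔

/-- A non-jump sequence of patterns on `l`: for every `k > 0` some tail is a
`(k, l)`-sequence. -/
def IsNonJumpSeq (r : ℕ) (l : ℝ) (ι : ℕ → Type)
    [∀ t, Fintype (ι t)] [∀ t, DecidableEq (ι t)]
    (𝓔 : ∀ t, Finset (Multiset (ι t))) : Prop :=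
  ∀ k : ℕ, 0 < k → ∃ t₀ : ℕ, IsKLambdaSeqFrom r k t₀ l ι 𝓔

/-- The family of all `r`-multisets on `Fin m` except the `m` constant ones. -/
def allButConstant (m r : ℕ) : Finset (Multiset (Fin m)) := by
  classical
  exact ((Finset.univ.sym r).image (fun s : Sym (Fin m) r => (s : Multiset (Fin m)))).filter
    (fun e => ¬ ∃ i : Fin m, e = Multiset.replicate r i)

end

noncomputable section

/-- The family of all `r`-multisets on `ι`. -/
def allMultisets (ι : Type) [Fintype ι] [DecidableEq ι] (r : ℕ) : Finset (Multiset ι) :=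
  (Finset.univ.sym r).image (fun s : Sym ι r => (s : Multiset ι))

lemma mem_allMultisets {ι : Type} [Fintype ι] [DecidableEq ι] {r : ℕ} {e : Multiset ι} :
    e ∈ allMultisets ι r ↔ e.card = r := by
  simp only [allMultisets, Finset.mem_image, Finset.mem_sym_iff, Finset.mem_univ, implies_true,
    true_and]
  constructor
  · rintro ⟨s, rfl⟩
    exact s.2
  · intro h
    exact ⟨⟨e, h⟩, rfl⟩

/-- The multinomial theorem: each coefficient `r! / ∏ i, E(i)!` is a multinomial coefficient. -/
lemma lagrangePoly_allMultisets {ι : Type} [Fintype ι] [DecidableEq ι] (r : ℕ) (x : ι → ℝ) :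
    lagrangePoly r (allMultisets ι r) x = (∑ i, x i) ^ r := by
  rw [Finset.sum_pow_eq_sum_piAntidiag, lagrangePoly, Finset.mul_sum]
  refine Finset.sum_bij (fun e _ i => Multiset.count i e) ?_ ?_ ?_ ?_
  · intro e he
    rw [mem_allMultisets] at he
    simp only [Finset.mem_piAntidiag, Finset.mem_univ, implies_true, and_true]
    rw [← he]
    exact Multiset.sum_count_eq_card (fun a _ => Finset.mem_univ a)
  · intro e _ e' _ h
    exact Multiset.ext.2 (fun a => congrFun h a)
  · intro k hk
    simp only [Finset.mem_piAntidiag, Finset.mem_univ, implies_true, and_true] at hk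
    have hc : ∀ i, Multiset.count i (∑ j, Multiset.replicate (k j) j) = k i := by
      intro i
      simp [Multiset.count_sum', Multiset.count_replicate]
    refine ⟨∑ j, Multiset.replicate (k j) j, ?_, funext hc⟩
    rw [mem_allMultisets, ← hk]
    simp
  · intro e he
    rw [mem_allMultisets] at he
    have hspec := Nat.multinomial_spec Finset.univ (fun i => Multiset.count i e)
    rw [Multiset.sum_count_eq_card (fun a _ => Finset.mem_univ a), he] at hspec
    have hpos : (∏ i, ((Multiset.count i e).factorial : ℝ)) ≠ 0 :=
      Finset.prod_ne_zero_iff.2 fun i _ => by positivity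
    rw [Finset.prod_div_distrib, ← hspec]
    push_cast
    field_simp

lemma lagrangePoly_mono {ι : Type} [Fintype ι] [DecidableEq ι] (r : ℕ)
    {E F : Finset (Multiset ι)} (h : E ⊆ F) {x : ι → ℝ} (hx : ∀ i, 0 ≤ x i) :
    lagrangePoly r E x ≤ lagrangePoly r F x := by
  refine mul_le_mul_of_nonneg_left ?_ (by positivity)
  refine Finset.sum_le_sum_of_subset_of_nonneg h fun e _ _ => ?_
  exact Finset.prod_nonneg fun i _ => div_nonneg (pow_nonneg (hx i) _) (by positivity)

lemma lagrangePoly_sdiff {ι : Type} [Fintype ι] [DecidableEq ι] (r : ℕ)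
    {E F : Finset (Multiset ι)} (h : E ⊆ F) (x : ι → ℝ) :
    lagrangePoly r (F \ E) x = lagrangePoly r F x - lagrangePoly r E x := by
  simp only [lagrangePoly]
  rw [← Finset.sum_sdiff h]
  ring

lemma lagrangePoly_smul {ι : Type} [Fintype ι] [DecidableEq ι] (r : ℕ)
    {E : Finset (Multiset ι)} (hE : ∀ e ∈ E, e.card = r) (c : ℝ) (x : ι → ℝ) :
    lagrangePoly r E (fun i => c * x i) = c ^ r * lagrangePoly r E x := by
  simp only [lagrangePoly]
  rw [mul_left_comm, Finset.mul_sum _ _ (c ^ r)]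
  congr 1
  refine Finset.sum_congr rfl fun e he => ?_
  have hc : c ^ r = ∏ i, c ^ Multiset.count i e := by
    rw [Finset.prod_pow_eq_pow_sum, Multiset.sum_count_eq_card (fun a _ => Finset.mem_univ a),
      hE e he]
  rw [hc, ← Finset.prod_mul_distrib]
  refine Finset.prod_congr rfl fun i _ => ?_
  rw [mul_pow, mul_div_assoc]

/-- Transporting a family along an injection `f` amounts to pulling the weights back along `f`:
indices outside the range of `f` have multiplicity `0` and contribute factors `1`. -/
lemma lagrangePoly_image_map {ι κ : Type} [Fintype ι] [DecidableEq ι] [Fintype κ] [DecidableEq κ]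
    (r : ℕ) (E : Finset (Multiset κ)) {f : κ → ι} (hf : Function.Injective f) (x : ι → ℝ) :
    lagrangePoly r (E.image (Multiset.map f)) x = lagrangePoly r E (fun k => x (f k)) := by
  simp only [lagrangePoly]
  congr 1
  rw [Finset.sum_image (fun a _ b _ h => Multiset.map_injective hf h)]
  refine Finset.sum_congr rfl fun e _ => ?_
  symm
  refine Fintype.prod_of_injective f hf _ _ ?_ ?_
  · intro i hi
    have : Multiset.count i (Multiset.map f e) = 0 := by
      rw [Multiset.count_eq_zero, Multiset.mem_map]
      rintro ⟨k, _, rfl⟩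
      exact hi ⟨k, rfl⟩
    simp [this]
  · intro k
    rw [Multiset.count_map_eq_count' f e hf]

lemma lagrangePoly_le_one {ι : Type} [Fintype ι] [DecidableEq ι] (r : ℕ)
    {E : Finset (Multiset ι)} (hE : ∀ e ∈ E, e.card = r) {x : ι → ℝ} (hx : x ∈ stdSimplex ℝ ι) :
    lagrangePoly r E x ≤ 1 := by
  have h := lagrangePoly_mono r (F := allMultisets ι r)
    (fun e he => mem_allMultisets.2 (hE e he)) hx.1
  rwa [lagrangePoly_allMultisets, hx.2, one_pow] at h

lemma lagrangePoly_le_patternLagrangian {ι : Type} [Fintype ι] [DecidableEq ι] (r : ℕ)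
    {E : Finset (Multiset ι)} (hE : ∀ e ∈ E, e.card = r) {x : ι → ℝ} (hx : x ∈ stdSimplex ℝ ι) :
    lagrangePoly r E x ≤ patternLagrangian r E := by
  refine le_csSup ⟨1, ?_⟩ ⟨x, hx, rfl⟩
  rintro _ ⟨y, hy, rfl⟩
  exact lagrangePoly_le_one r hE hy

lemma patternLagrangian_le {ι : Type} [Fintype ι] [DecidableEq ι] [Nonempty ι] (r : ℕ)
    {E : Finset (Multiset ι)} {b : ℝ} (h : ∀ x ∈ stdSimplex ℝ ι, lagrangePoly r E x ≤ b) :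
    patternLagrangian r E ≤ b := by
  classical
  refine csSup_le ⟨_, _, single_mem_stdSimplex ℝ (Classical.arbitrary ι), rfl⟩ ?_
  rintro _ ⟨x, hx, rfl⟩
  exact h x hx

/-- Homogeneity turns the bound by the Lagrangian on the simplex into a bound on the whole
nonnegative orthant. -/
lemma lagrangePoly_le_mul_pow {ι : Type} [Fintype ι] [DecidableEq ι] [Nonempty ι] (r : ℕ)
    {E : Finset (Multiset ι)} (hE : ∀ e ∈ E, e.card = r) {x : ι → ℝ} (hx : ∀ i, 0 ≤ x i) :
    lagrangePoly r E x ≤ patternLagrangian r E * (∑ i, x i) ^ r := by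
  obtain ⟨z, hz, hxz⟩ : ∃ z ∈ stdSimplex ℝ ι, x = fun i => (∑ j, x j) * z i := by
    by_cases h0 : ∑ j, x j = 0
    · refine ⟨_, single_mem_stdSimplex ℝ (Classical.arbitrary ι), ?_⟩
      funext i
      rw [h0, zero_mul]
      exact (Finset.sum_eq_zero_iff_of_nonneg fun i _ => hx i).1 h0 i (Finset.mem_univ i)
    · refine ⟨fun i => x i / ∑ j, x j, ⟨fun i => ?_, ?_⟩, ?_⟩
      · exact div_nonneg (hx i) (Finset.sum_nonneg fun i _ => hx i)
      · rw [← Finset.sum_div, div_self h0]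
      · funext i
        field_simp
  have h := lagrangePoly_le_patternLagrangian r hE hz
  have hs : 0 ≤ (∑ i, x i) ^ r := pow_nonneg (Finset.sum_nonneg fun i _ => hx i) r
  calc lagrangePoly r E x = (∑ i, x i) ^ r * lagrangePoly r E z := by
        conv_lhs => rw [hxz]
        rw [lagrangePoly_smul r hE]
    _ ≤ _ := by
        rw [mul_comm]
        exact mul_le_mul_of_nonneg_right h hs

/-! ### The union pattern -/

/-- The embedding of `Fin n` as the `i`-th copy inside the index set of the union. -/
def copyEmb (m n : ℕ) (i : Fin m) (k : Fin n) :
    unionIndexT (Fin m) (Fin n) (Finset.univ : Finset (Fin m)) :=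
  Sum.inr (⟨i, Finset.mem_univ i⟩, k)

lemma copyEmb_injective (m n : ℕ) (i : Fin m) : Function.Injective (copyEmb m n i) := by
  intro a b h
  simpa [copyEmb] using h

lemma exists_copyEmb {m n : ℕ} (a : unionIndexT (Fin m) (Fin n) (Finset.univ : Finset (Fin m))) :
    ∃ k, a = copyEmb m n (unionProjT Finset.univ a) k := by
  rcases a with ⟨j, hj⟩ | ⟨⟨i, hi⟩, k⟩
  · exact absurd (Finset.mem_univ j) hj
  · exact ⟨k, rfl⟩

/-- A sum over the index set of the union is a double sum over copies and vertices. -/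
lemma sum_unionIndexT {m n : ℕ}
    (x : unionIndexT (Fin m) (Fin n) (Finset.univ : Finset (Fin m)) → ℝ) :
    ∑ a, x a = ∑ i, ∑ k, x (copyEmb m n i k) := by
  rw [← Fintype.sum_prod_type']
  symm
  refine Fintype.sum_bijective (fun p : Fin m × Fin n => copyEmb m n p.1 p.2) ⟨?_, ?_⟩ _ _
    (fun _ => rfl)
  · rintro ⟨i, k⟩ ⟨j, l⟩ h
    simpa [copyEmb] using h
  · intro a
    obtain ⟨k, hk⟩ := exists_copyEmb a
    exact ⟨(_, k), hk.symm⟩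

lemma mem_union {m n r : ℕ} {E : Finset (Multiset (Fin n))}
    {R : Multiset (unionIndexT (Fin m) (Fin n) (Finset.univ : Finset (Fin m)))} :
    R ∈ unionFamilyT r (allButConstant m r) E Finset.univ ↔
      R.card = r ∧ ((¬ ∃ i, R.map (unionProjT Finset.univ) = Multiset.replicate r i) ∨
        ∃ i, ∃ e ∈ E, R = e.map (copyEmb m n i)) := by
  have hall : ∀ e : Multiset (Fin m), e ∈ allButConstant m r ↔
      e.card = r ∧ ¬ ∃ i, e = Multiset.replicate r i := by
    intro e
    rw [← mem_allMultisets (ι := Fin m)]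
    simp [allButConstant, allMultisets]
  simp only [unionFamilyT, Finset.mem_image, Finset.mem_filter, Finset.mem_sym_iff,
    Finset.mem_univ, implies_true, true_and, hall]
  constructor
  · rintro ⟨s, h | ⟨i, e, he, h⟩, rfl⟩
    · exact ⟨s.2, Or.inl h.2⟩
    · exact ⟨s.2, Or.inr ⟨i.1, e, he, h⟩⟩
  · rintro ⟨hR, h | ⟨i, e, he, h⟩⟩
    · exact ⟨⟨R, hR⟩, Or.inl ⟨by simpa using hR, h⟩, rfl⟩
    · exact ⟨⟨R, hR⟩, Or.inr ⟨⟨i, Finset.mem_univ i⟩, e, he, h⟩, rfl⟩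

lemma map_proj_map_copyEmb {m n : ℕ} (i : Fin m) (e : Multiset (Fin n)) :
    (e.map (copyEmb m n i)).map (unionProjT Finset.univ) = Multiset.replicate e.card i := by
  rw [Multiset.map_map]
  exact Multiset.map_const' e i

/-- The `r`-multisets missing from the union pattern are the copies of the `r`-multisets missing
from the second pattern. -/
lemma allMultisets_sdiff_union {m n r : ℕ} (hr : r ≠ 0) {E : Finset (Multiset (Fin n))}
    (hE : ∀ e ∈ E, e.card = r) :
    allMultisets (unionIndexT (Fin m) (Fin n) (Finset.univ : Finset (Fin m))) r \
        unionFamilyT r (allButConstant m r) E Finset.univ =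
      Finset.univ.biUnion fun i =>
        (allMultisets (Fin n) r \ E).image (Multiset.map (copyEmb m n i)) := by
  ext R
  simp only [Finset.mem_sdiff, mem_allMultisets, mem_union, Finset.mem_biUnion, Finset.mem_univ,
    true_and, Finset.mem_image]
  constructor
  · rintro ⟨hR, h⟩
    push Not at h
    obtain ⟨⟨i, hi⟩, hno⟩ := h hR
    have hproj : ∀ a ∈ R, unionProjT Finset.univ a = i := fun a ha =>
      Multiset.eq_of_mem_replicate (hi ▸ Multiset.mem_map_of_mem _ ha)
    choose g hg using exists_copyEmb (m := m) (n := n)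
    have hRe : (R.map g).map (copyEmb m n i) = R := by
      rw [Multiset.map_map]
      conv_rhs => rw [← Multiset.map_id R]
      refine Multiset.map_congr rfl fun a ha => ?_
      have := hg a
      rw [hproj a ha] at this
      exact this.symm
    exact ⟨i, R.map g, ⟨by simpa using hR, fun he => hno i _ he hRe.symm⟩, hRe⟩
  · rintro ⟨i, e, ⟨he, heE⟩, rfl⟩
    refine ⟨by simpa using he, ?_⟩
    rintro ⟨-, h | ⟨j, e', he', h⟩⟩
    · exact h ⟨i, by rw [map_proj_map_copyEmb, he]⟩
    · -- Projecting shows that the two copies coincide, as `r ≠ 0`.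
      have hp := congrArg (Multiset.map (unionProjT Finset.univ)) h
      rw [map_proj_map_copyEmb, map_proj_map_copyEmb, he, hE e' he',
        Multiset.replicate_right_inj hr] at hp
      subst hp
      exact heE (Multiset.map_injective (copyEmb_injective m n i) h ▸ he')

lemma lagrangePoly_union {m n r : ℕ} (hr : r ≠ 0) {E : Finset (Multiset (Fin n))}
    (hE : ∀ e ∈ E, e.card = r)
    (x : unionIndexT (Fin m) (Fin n) (Finset.univ : Finset (Fin m)) → ℝ) :
    lagrangePoly r (unionFamilyT r (allButConstant m r) E Finset.univ) x =
      (∑ i, ∑ k, x (copyEmb m n i k)) ^ r -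
        ∑ i, ((∑ k, x (copyEmb m n i k)) ^ r -
          lagrangePoly r E (fun k => x (copyEmb m n i k))) := by
  have hsub : unionFamilyT r (allButConstant m r) E Finset.univ ⊆
      allMultisets (unionIndexT (Fin m) (Fin n) (Finset.univ : Finset (Fin m))) r :=
    fun R hR => mem_allMultisets.2 (mem_union.1 hR).1
  have h := lagrangePoly_sdiff r hsub x
  rw [lagrangePoly_allMultisets, sum_unionIndexT, allMultisets_sdiff_union hr hE] at h
  have hbi : lagrangePoly r (Finset.univ.biUnion fun i =>
        (allMultisets (Fin n) r \ E).image (Multiset.map (copyEmb m n i))) x =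
      ∑ i, lagrangePoly r ((allMultisets (Fin n) r \ E).image
        (Multiset.map (copyEmb m n i))) x := by
    simp only [lagrangePoly]
    rw [Finset.sum_biUnion, Finset.mul_sum]
    intro i _ j _ hij
    refine Finset.disjoint_left.2 fun R hi hj => hij ?_
    simp only [Finset.mem_image, Finset.mem_sdiff, mem_allMultisets] at hi hj
    obtain ⟨e, ⟨he, -⟩, rfl⟩ := hi
    obtain ⟨e', ⟨he', -⟩, h'⟩ := hj
    have hp := congrArg (Multiset.map (unionProjT Finset.univ)) h'
    rw [map_proj_map_copyEmb, map_proj_map_copyEmb, he, he',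
      Multiset.replicate_right_inj hr] at hp
    exact hp.symm
  rw [hbi] at h
  have hi : ∀ i, lagrangePoly r ((allMultisets (Fin n) r \ E).image
        (Multiset.map (copyEmb m n i))) x =
      (∑ k, x (copyEmb m n i k)) ^ r - lagrangePoly r E (fun k => x (copyEmb m n i k)) := by
    intro i
    rw [lagrangePoly_image_map r _ (copyEmb_injective m n i),
      lagrangePoly_sdiff r (fun e he => mem_allMultisets.2 (hE e he)), lagrangePoly_allMultisets]
  simp only [hi] at h
  linarith

end

/-- for `P = (m, 𝓔)` with `𝓔` all non-constant `r`-multisets on `[m]` and any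
`r`-graph `G` (on a nonempty vertex set), `λ(P ⊕_{[m]} P_G) = 1 − (1 − λ(G))/m^{r−1}`. -/
theorem union_allButConstant_lagrangian (m r : ℕ) (hm : 2 ≤ m) (hr : 2 ≤ r)
    (n : ℕ) (hn : 0 < n) (G : Finset (Finset (Fin n))) (hG : ∀ e ∈ G, e.card = r) :
    patternLagrangian r
        (unionFamilyT r (allButConstant m r) (graphPattern G)
          (Finset.univ : Finset (Fin m))) =
      1 - (1 - graphLagrangian r G) / (m : ℝ) ^ (r - 1) := by
  have hE : ∀ e ∈ graphPattern G, e.card = r := by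
    intro e he
    obtain ⟨s, hs, rfl⟩ := Finset.mem_image.1 he
    exact hG s hs
  have hr0 : r ≠ 0 := by omega
  obtain ⟨q, rfl⟩ : ∃ q, r = q + 1 := ⟨r - 1, by omega⟩
  have : Nonempty (Fin n) := ⟨⟨0, hn⟩⟩
  have : Nonempty (unionIndexT (Fin m) (Fin n) (Finset.univ : Finset (Fin m))) :=
    ⟨copyEmb m n ⟨0, by omega⟩ ⟨0, hn⟩⟩
  have hm0 : (0 : ℝ) < m := by exact_mod_cast (by omega : 0 < m)
  have hmq : (0 : ℝ) < (m : ℝ) ^ q := pow_pos hm0 q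
  have hL1 : graphLagrangian (q + 1) G ≤ 1 :=
    patternLagrangian_le _ fun x hx => lagrangePoly_le_one _ hE hx
  rw [Nat.add_sub_cancel]
  apply le_antisymm
  · refine patternLagrangian_le _ fun x hx => ?_
    have hsum := hx.2
    rw [sum_unionIndexT] at hsum
    rw [lagrangePoly_union hr0 hE, hsum, one_pow]
    have hy : ∀ i ∈ (Finset.univ : Finset (Fin m)), 0 ≤ ∑ k, x (copyEmb m n i k) :=
      fun i _ => Finset.sum_nonneg fun k _ => hx.1 _
    have hpm := pow_sum_div_card_le_sum_pow hy q
    rw [hsum, one_pow, Finset.card_univ, Fintype.card_fin] at hpm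
    have hterm : (1 - graphLagrangian (q + 1) G) * ∑ i, (∑ k, x (copyEmb m n i k)) ^ (q + 1) ≤
        ∑ i, ((∑ k, x (copyEmb m n i k)) ^ (q + 1) -
          lagrangePoly (q + 1) (graphPattern G) (fun k => x (copyEmb m n i k))) := by
      rw [Finset.mul_sum]
      refine Finset.sum_le_sum fun i _ => ?_
      have := lagrangePoly_le_mul_pow (q + 1) hE (x := fun k => x (copyEmb m n i k))
        (fun k => hx.1 _)
      rw [graphLagrangian, sub_mul, one_mul]
      linarith
    have := mul_le_mul_of_nonneg_left hpm (sub_nonneg.2 hL1)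
    rw [mul_one_div] at this
    linarith
  · set S := patternLagrangian (q + 1) (unionFamilyT (q + 1) (allButConstant m (q + 1))
      (graphPattern G) (Finset.univ : Finset (Fin m))) with hS
    -- Solved for `λ(G)`, the claim is an upper bound for a supremum over the simplex on `Fin n`.
    suffices h : graphLagrangian (q + 1) G ≤ 1 - (1 - S) * (m : ℝ) ^ q by
      have : 1 - S ≤ (1 - graphLagrangian (q + 1) G) / (m : ℝ) ^ q := by
        rw [le_div_iff₀ hmq]
        linarith
      linarith
    refine patternLagrangian_le _ fun z hz => ?_
    let x : unionIndexT (Fin m) (Fin n) (Finset.univ : Finset (Fin m)) → ℝ :=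
      Sum.elim (fun _ => 0) (fun p => (m : ℝ)⁻¹ * z p.2)
    have hxc : ∀ i k, x (copyEmb m n i k) = (m : ℝ)⁻¹ * z k := fun _ _ => rfl
    have hxs : ∀ i, ∑ k, x (copyEmb m n i k) = (m : ℝ)⁻¹ := by
      intro i
      simp only [hxc]
      rw [← Finset.mul_sum, hz.2, mul_one]
    have htot : ∑ i, ∑ k, x (copyEmb m n i k) = 1 := by
      simp only [hxs]
      simp [hm0.ne']
    have hx : x ∈ stdSimplex ℝ _ := by
      refine ⟨fun a => ?_, by rw [sum_unionIndexT, htot]⟩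
      obtain ⟨k, hk⟩ := exists_copyEmb a
      rw [hk, hxc]
      exact mul_nonneg (inv_nonneg.2 hm0.le) (hz.1 k)
    have hle := lagrangePoly_le_patternLagrangian (q + 1)
      (fun R hR => (mem_union.1 hR).1 : ∀ R ∈ unionFamilyT (q + 1) (allButConstant m (q + 1))
        (graphPattern G) (Finset.univ : Finset (Fin m)), R.card = q + 1) hx
    rw [← hS, lagrangePoly_union hr0 hE, htot, one_pow] at hle
    simp only [hxs] at hle
    simp only [hxc] at hle
    rw [lagrangePoly_smul _ hE] at hle
    rw [Finset.sum_const, Finset.card_univ, Fintype.card_fin, nsmul_eq_mul] at hle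
    set l := lagrangePoly (q + 1) (graphPattern G) z
    have hid : (m : ℝ) * ((m : ℝ)⁻¹ ^ (q + 1) - (m : ℝ)⁻¹ ^ (q + 1) * l) * (m : ℝ) ^ q =
        1 - l := by
      rw [inv_pow, pow_succ]
      field_simp
    have := mul_le_mul_of_nonneg_right hle hmq.le
    rw [sub_mul, hid] at this
    linarith
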